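/- There is a constant A > 0 such that for every ε ∈ (0,1) and C_U > 0 there exist κ > 0 and x₀ with the following property: for all x ≥ x₀, all integers M ≤ κ·x^{1/5}, and all real K ≥ 2, ∑_{U/(zK) ≤ m < U/z} |R_m^{(M)}| ≤ A·U·M·log K/((log x)·(log y)·φ(M)), where the sum is over integers m in the stated range. -/

import Mathlib

open scoped Classical

/-- `y = exp((1−ε)·log x·log₃x/log₂x)`. -/
noncomputable def yy (ε x : ℝ) : ℝ :=
  Real.exp ((1 - ε) * Real.log x * Real.log^[3] x / Real.log^[2] x)

/-- `z = x/log₂ x`. -/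
noncomputable def zz (x : ℝ) : ℝ := x / Real.log^[2] x

/-- `U = C_U·(φ(M)/M)·x·log y/log₂ x`. -/
noncomputable def UU (CU : ℝ) (M : ℕ) (ε x : ℝ) : ℝ :=
  CU * ((M.totient : ℝ) / (M : ℝ)) * x * Real.log (yy ε x) / Real.log^[2] x

/-- `P_M(t) = ∏_{p ≤ t, p ∤ M} p`. -/
noncomputable def PM (M : ℕ) (t : ℝ) : ℕ :=
  ∏ p ∈ (Finset.range (⌊t⌋₊ + 1)).filter (fun p : ℕ => p.Prime ∧ ¬ p ∣ M), p

/-- `R_m^{(M)} = {p prime : z < p ≤ U/m, gcd(mp − 1, P_M(y)) = 1}`. -/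
noncomputable def RmM (CU ε x : ℝ) (M m : ℕ) : Finset ℕ :=
  (Finset.range (⌊UU CU M ε x / (m : ℝ)⌋₊ + 1)).filter (fun p : ℕ =>
    p.Prime ∧ zz x < (p : ℝ) ∧ Nat.gcd (m * p - 1) (PM M (yy ε x)) = 1)

/-!
Fix `m`. A prime `p > z` for which `m * p - 1` is coprime to `P_M(y)` avoids the class `0` modulo
every prime `q ≤ t * y`, where `t = x ^ (1 / 16)`, and moreover the class of `m⁻¹` modulo every
`q ≤ y` that does not divide `2 * m * M`. Selberg's sieve with weights of level `R = t * y` bounds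
the number of such `p ≤ U / m` by `(U / m) / S + R ^ 4`, where `S` is the sum over squarefree
`l ≤ R` of `∏ ω(q) / (q - ω(q))`, with `ω(q)` the number of classes avoided modulo `q`.
Expanding geometric series, `S` dominates the sum over `n ≤ R` of the completely multiplicative
function with value `ω(q) / q` at `q`, hence the product of `∑ 1 / a` over `a ≤ t` with
`∑ 1 / b` over the `b ≤ y` coprime to `2 * m * M`. This yields
`S ≥ φ(2 * m * M) / (2 * m * M) * log t * log y`, so
`|R_m| ≪ U * M / (φ(M) * log x * log y * φ(m))`, and the sum of `1 / φ(m)` over an interval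
`[α, K * α]` is `≪ log K`.
-/

open Finset

/-! ### Selberg's optimal weights -/

section SelbergWeights

open ArithmeticFunction
open scoped ArithmeticFunction.Moebius

lemma sum_divisors_filter_dvd_moebius {l : ℕ} (hl : Squarefree l) (k : ℕ) :
    ∑ d ∈ l.divisors with k ∣ d, μ d = if k = l then μ l else 0 := by
  by_cases hkl : k ∣ l
  · obtain ⟨e, rfl⟩ := hkl
    have hk : 0 < k := Nat.pos_of_ne_zero (left_ne_zero_of_mul hl.ne_zero)
    have he : e ≠ 0 := right_ne_zero_of_mul hl.ne_zero
    have hmultiples : (k * e).divisors.filter (k ∣ ·) = e.divisors.image (k * ·) := by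
      ext d
      simp only [mem_filter, Nat.mem_divisors, mem_image]
      constructor
      · rintro ⟨⟨hd, -⟩, f, rfl⟩
        exact ⟨f, ⟨Nat.dvd_of_mul_dvd_mul_left hk hd, he⟩, rfl⟩
      · rintro ⟨f, ⟨hf, -⟩, rfl⟩
        exact ⟨⟨mul_dvd_mul_left k hf, hl.ne_zero⟩, dvd_mul_right k f⟩
    have hsplit : ∀ d ∈ e.divisors, μ (k * d) = μ k * μ d := fun d hd ↦
      isMultiplicative_moebius.map_mul_of_coprime
        ((Nat.coprime_of_squarefree_mul hl).coprime_dvd_right (Nat.dvd_of_mem_divisors hd))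
    rw [hmultiples, sum_image fun a _ b _ h ↦ Nat.eq_of_mul_eq_mul_left hk h,
      sum_congr rfl hsplit, ← mul_sum, ← coe_mul_zeta_apply, moebius_mul_coe_zeta, one_apply]
    rcases eq_or_ne e 1 with rfl | he1
    · simp
    · simp [he1, hk.ne']
  · rw [if_neg fun h ↦ hkl h.dvd, sum_eq_zero]
    intro d hd
    rw [mem_filter, Nat.mem_divisors] at hd
    exact absurd (hd.2.trans hd.1.1) hkl

variable (s : BoundingSieve) (R : ℕ)

/-- The support of Selberg's weights: the divisors of the sifting modulus up to `R`. -/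
def selbergSupport : Finset ℕ := s.prodPrimes.divisors.filter (· ≤ R)

/-- The sum `S` of Selberg's `g` over `selbergSupport`; the sieve bounds the sifted sum by
`totalMass / S` plus an error. -/
noncomputable def selbergSum : ℝ := ∑ l ∈ selbergSupport s R, s.selbergTerms l

/-- Selberg's weights `λ_d = μ(d) / (S ν(d)) · ∑_{d ∣ l} g(l)`, which minimise the main term of the
`Λ²` sieve among all weights supported on `selbergSupport` with `λ_1 = 1`. -/
noncomputable def selbergWeight (d : ℕ) : ℝ :=
  μ d / (selbergSum s R * s.nu d) * ∑ l ∈ selbergSupport s R with d ∣ l, s.selbergTerms l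

variable {s R}

lemma mem_selbergSupport {l : ℕ} : l ∈ selbergSupport s R ↔ l ∣ s.prodPrimes ∧ l ≤ R := by
  simp [selbergSupport, BoundingSieve.prodPrimes_ne_zero]

lemma mem_selbergSupport_of_dvd {d l : ℕ} (hl : l ∈ selbergSupport s R) (hd : d ∣ l) :
    d ∈ selbergSupport s R := by
  rw [mem_selbergSupport] at hl ⊢
  exact ⟨hd.trans hl.1,
    (Nat.le_of_dvd (BoundingSieve.squarefree_of_dvd_prodPrimes hl.1).ne_zero.bot_lt hd).trans hl.2⟩

lemma selbergTerms_nonneg {l : ℕ} (hl : l ∈ selbergSupport s R) : 0 ≤ s.selbergTerms l :=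
  (BoundingSieve.selbergTerms_pos (mem_selbergSupport.1 hl).1).le

lemma selbergSum_pos (hR : 1 ≤ R) : 0 < selbergSum s R :=
  sum_pos (fun _ hl ↦ BoundingSieve.selbergTerms_pos (mem_selbergSupport.1 hl).1)
    ⟨1, mem_selbergSupport.2 ⟨one_dvd _, hR⟩⟩

lemma selbergWeight_one (hR : 1 ≤ R) : selbergWeight s R 1 = 1 := by
  have hS := (selbergSum_pos (s := s) hR).ne'
  simp only [selbergWeight, moebius_apply_one, Int.cast_one, s.nu_mult.map_one, mul_one, one_dvd,
    filter_true]
  exact one_div_mul_cancel hS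

lemma selbergWeight_eq_zero {d : ℕ} (hd : d ∉ selbergSupport s R) : selbergWeight s R d = 0 := by
  rw [selbergWeight, filter_false_of_mem fun l hl h ↦ hd (mem_selbergSupport_of_dvd hl h),
    sum_empty, mul_zero]

-- Since `d` is coprime to each `l / d`, the products `k * (l / d)` are distinct, and at most `R`.
lemma sum_divisors_mul_sum_div_le_selbergSum {d : ℕ} (hd : d ∣ s.prodPrimes) :
    (∑ k ∈ d.divisors, s.selbergTerms k) *
      ∑ l ∈ selbergSupport s R with d ∣ l, s.selbergTerms (l / d) ≤ selbergSum s R := by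
  have hd0 : 0 < d := (BoundingSieve.squarefree_of_dvd_prodPrimes hd).ne_zero.bot_lt
  have hcoprime {l : ℕ} (hl : l ∈ selbergSupport s R ∧ d ∣ l) : d.Coprime (l / d) := by
    have hsq := BoundingSieve.squarefree_of_dvd_prodPrimes (mem_selbergSupport.1 hl.1).1
    rw [← Nat.mul_div_cancel' hl.2] at hsq
    exact Nat.coprime_of_squarefree_mul hsq
  have hinj : Set.InjOn (fun p : ℕ × ℕ ↦ p.1 * (p.2 / d))
      (d.divisors ×ˢ (selbergSupport s R).filter (d ∣ ·) : Finset (ℕ × ℕ)) := by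
    rintro ⟨k, l⟩ hkl ⟨k', l'⟩ hkl' (heq : k * (l / d) = k' * (l' / d))
    simp only [coe_product, Set.mem_prod, mem_coe, Nat.mem_divisors, mem_filter] at hkl hkl'
    have gcd_eq {k l : ℕ} (hk : k ∣ d) (hl : l ∈ selbergSupport s R ∧ d ∣ l) :
        (k * (l / d)).gcd d = k := by
      rw [(hcoprime hl).symm.gcd_mul_right_cancel, Nat.gcd_eq_left hk]
    have hk : k = k' := by
      rw [← gcd_eq hkl.1.1 hkl.2, heq, gcd_eq hkl'.1.1 hkl'.2]
    subst hk
    have hk0 : 0 < k := Nat.pos_of_dvd_of_pos hkl.1.1 hd0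
    have hdiv : l / d = l' / d := Nat.eq_of_mul_eq_mul_left hk0 heq
    rw [← Nat.div_mul_cancel hkl.2.2, hdiv, Nat.div_mul_cancel hkl'.2.2]
  have hmult : ∀ p ∈ d.divisors ×ˢ (selbergSupport s R).filter (d ∣ ·),
      s.selbergTerms p.1 * s.selbergTerms (p.2 / d) = s.selbergTerms (p.1 * (p.2 / d)) := by
    intro p hp
    simp only [mem_product, Nat.mem_divisors, mem_filter] at hp
    exact (BoundingSieve.selbergTerms_isMultiplicative.map_mul_of_coprime
      ((hcoprime hp.2).coprime_dvd_left hp.1.1)).symm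
  rw [sum_mul_sum, ← sum_product', sum_congr rfl hmult, ← sum_image hinj]
  refine sum_le_sum_of_subset_of_nonneg (image_subset_iff.2 fun p hp ↦ ?_)
    fun l hl _ ↦ selbergTerms_nonneg hl
  simp only [mem_product, Nat.mem_divisors, mem_filter] at hp
  refine mem_selbergSupport_of_dvd hp.2.1 ?_
  calc p.1 * (p.2 / d) ∣ d * (p.2 / d) := mul_dvd_mul_right hp.1.1 _
    _ = p.2 := Nat.mul_div_cancel' hp.2.2

lemma abs_selbergWeight_le_one (hR : 1 ≤ R) {d : ℕ} (hd : d ∣ s.prodPrimes) :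
    |selbergWeight s R d| ≤ 1 := by
  have hS : 0 < selbergSum s R := selbergSum_pos hR
  have hν : 0 < s.nu d := BoundingSieve.nu_pos_of_dvd_prodPrimes hd
  have hμ : |(μ d : ℝ)| ≤ 1 := mod_cast abs_moebius_le_one
  have hsum_nonneg : 0 ≤ ∑ l ∈ selbergSupport s R with d ∣ l, s.selbergTerms l :=
    sum_nonneg fun l hl ↦ selbergTerms_nonneg (mem_filter.1 hl).1
  have hfactor : ∑ l ∈ selbergSupport s R with d ∣ l, s.selbergTerms l =
      s.selbergTerms d * ∑ l ∈ selbergSupport s R with d ∣ l, s.selbergTerms (l / d) := by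
    rw [mul_sum]
    refine sum_congr rfl fun l hl ↦ ?_
    obtain ⟨hl, e, rfl⟩ := mem_filter.1 hl
    have hsq := BoundingSieve.squarefree_of_dvd_prodPrimes (mem_selbergSupport.1 hl).1
    rw [Nat.mul_div_cancel_left e (left_ne_zero_of_mul hsq.ne_zero).bot_lt]
    exact BoundingSieve.selbergTerms_isMultiplicative.map_mul_of_coprime
      (Nat.coprime_of_squarefree_mul hsq)
  have hdivisors : s.selbergTerms d * (s.nu d)⁻¹ = ∑ k ∈ d.divisors, s.selbergTerms k := by
    rw [← BoundingSieve.sum_divisors_selbergTerms_eq_selbergTerms_mul_nu_inv hd, ← sum_filter,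
      Nat.divisors_filter_dvd_of_dvd BoundingSieve.prodPrimes_ne_zero hd]
  rw [selbergWeight, abs_mul, abs_div, abs_of_pos (mul_pos hS hν), abs_of_nonneg hsum_nonneg]
  calc |(μ d : ℝ)| / (selbergSum s R * s.nu d) *
        ∑ l ∈ selbergSupport s R with d ∣ l, s.selbergTerms l
      ≤ 1 / (selbergSum s R * s.nu d) *
        ∑ l ∈ selbergSupport s R with d ∣ l, s.selbergTerms l := by gcongr
    _ = (selbergSum s R)⁻¹ * ((∑ k ∈ d.divisors, s.selbergTerms k) *
        ∑ l ∈ selbergSupport s R with d ∣ l, s.selbergTerms (l / d)) := by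
      rw [hfactor, ← hdivisors]
      field_simp
    _ ≤ (selbergSum s R)⁻¹ * selbergSum s R := by
      gcongr
      exact sum_divisors_mul_sum_div_le_selbergSum hd
    _ = 1 := inv_mul_cancel₀ hS.ne'

lemma sum_nu_mul_selbergWeight {k : ℕ} (hk : k ∣ s.prodPrimes) :
    (∑ d ∈ s.prodPrimes.divisors, if k ∣ d then s.nu d * selbergWeight s R d else 0) =
      if k ≤ R then μ k * s.selbergTerms k / selbergSum s R else 0 := by
  have hexpand : ∀ d ∈ s.prodPrimes.divisors,
      (if k ∣ d then s.nu d * selbergWeight s R d else 0) =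
        ∑ l ∈ selbergSupport s R, s.selbergTerms l / selbergSum s R *
          (if d ∣ l ∧ k ∣ d then (μ d : ℝ) else 0) := by
    intro d hd
    have hν : s.nu d ≠ 0 := BoundingSieve.nu_ne_zero (Nat.dvd_of_mem_divisors hd)
    by_cases hkd : k ∣ d
    · simp only [selbergWeight, hkd, if_true, and_true, sum_filter, mul_sum]
      refine sum_congr rfl fun l _ ↦ ?_
      split_ifs <;> field_simp
      simp
    · simp [hkd]
  have hmoebius : ∀ l ∈ selbergSupport s R,
      (∑ d ∈ s.prodPrimes.divisors, if d ∣ l ∧ k ∣ d then (μ d : ℝ) else 0) =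
        if k = l then (μ l : ℝ) else 0 := by
    intro l hl
    have hlP := (mem_selbergSupport.1 hl).1
    rw [← sum_filter, ← filter_filter,
      Nat.divisors_filter_dvd_of_dvd BoundingSieve.prodPrimes_ne_zero hlP]
    exact_mod_cast sum_divisors_filter_dvd_moebius
      (BoundingSieve.squarefree_of_dvd_prodPrimes hlP) k
  rw [sum_congr rfl hexpand, sum_comm]
  simp only [← mul_sum]
  rw [sum_congr rfl fun l hl ↦ by rw [hmoebius l hl]]
  simp only [mul_ite, mul_zero, sum_ite_eq, mem_selbergSupport, hk, true_and]
  congr 1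
  ring

lemma mainSum_lambdaSquared_selbergWeight (hR : 1 ≤ R) :
    s.mainSum (BoundingSieve.lambdaSquared (selbergWeight s R)) = 1 / selbergSum s R := by
  have hS : selbergSum s R ≠ 0 := (selbergSum_pos hR).ne'
  have hterm : ∀ l ∈ s.prodPrimes.divisors, (s.selbergTerms l)⁻¹ *
      (∑ d ∈ s.prodPrimes.divisors, if l ∣ d then s.nu d * selbergWeight s R d else 0) ^ 2 =
        if l ≤ R then s.selbergTerms l / selbergSum s R ^ 2 else 0 := by
    intro l hl
    have hlP := Nat.dvd_of_mem_divisors hl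
    have hg := (BoundingSieve.selbergTerms_pos hlP).ne'
    have hμ : (μ l : ℝ) ^ 2 = 1 := mod_cast
      moebius_sq_eq_one_of_squarefree (BoundingSieve.squarefree_of_dvd_prodPrimes hlP)
    rw [sum_nu_mul_selbergWeight hlP]
    split_ifs
    · rw [div_pow, mul_pow, hμ]
      field_simp
    · simp
  rw [BoundingSieve.mainSum_lambdaSquared_eq_sum_mul_sum_sq, sum_congr rfl hterm, ← sum_filter,
    ← sum_div]
  change selbergSum s R / selbergSum s R ^ 2 = _
  field_simp

lemma errSum_lambdaSquared_le (w : ℕ → ℝ) :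
    s.errSum (BoundingSieve.lambdaSquared w) ≤
      ∑ d₁ ∈ s.prodPrimes.divisors, ∑ d₂ ∈ s.prodPrimes.divisors,
        |w d₁| * |w d₂| * |s.rem (d₁.lcm d₂)| := by
  have hterm : ∀ d ∈ s.prodPrimes.divisors, |BoundingSieve.lambdaSquared w d| ≤
      ∑ d₁ ∈ s.prodPrimes.divisors, ∑ d₂ ∈ s.prodPrimes.divisors,
        if d = d₁.lcm d₂ then |w d₁| * |w d₂| else 0 := by
    intro d hd
    have hsub : d.divisors ⊆ s.prodPrimes.divisors :=
      Nat.divisors_subset_of_dvd BoundingSieve.prodPrimes_ne_zero (Nat.dvd_of_mem_divisors hd)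
    calc |BoundingSieve.lambdaSquared w d|
        ≤ ∑ d₁ ∈ d.divisors, ∑ d₂ ∈ d.divisors,
            if d = d₁.lcm d₂ then |w d₁| * |w d₂| else 0 := by
          refine (abs_sum_le_sum_abs _ _).trans (sum_le_sum fun d₁ _ ↦
            (abs_sum_le_sum_abs _ _).trans (sum_le_sum fun d₂ _ ↦ ?_))
          rw [apply_ite abs, abs_mul, abs_zero]
      _ ≤ _ := by
          refine (sum_le_sum fun d₁ _ ↦ sum_le_sum_of_subset_of_nonneg hsub ?_).trans
            (sum_le_sum_of_subset_of_nonneg hsub ?_)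
          · intros; positivity
          · intros; positivity
  calc s.errSum (BoundingSieve.lambdaSquared w)
      ≤ ∑ d ∈ s.prodPrimes.divisors, ∑ d₁ ∈ s.prodPrimes.divisors, ∑ d₂ ∈ s.prodPrimes.divisors,
          if d = d₁.lcm d₂ then |w d₁| * |w d₂| * |s.rem d| else 0 := by
        refine sum_le_sum fun d hd ↦
          (mul_le_mul_of_nonneg_right (hterm d hd) (abs_nonneg _)).trans_eq ?_
        simp only [sum_mul, ite_mul, zero_mul]
    _ = _ := by
        rw [sum_comm]
        refine sum_congr rfl fun d₁ hd₁ ↦ ?_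
        rw [sum_comm]
        refine sum_congr rfl fun d₂ hd₂ ↦ sum_ite_eq_of_mem' _ _ _ (Nat.mem_divisors.2 ⟨?_, ?_⟩)
        · exact Nat.lcm_dvd (Nat.dvd_of_mem_divisors hd₁) (Nat.dvd_of_mem_divisors hd₂)
        · exact BoundingSieve.prodPrimes_ne_zero

theorem siftedSum_le_totalMass_div_selbergSum_add (hR : 1 ≤ R) :
    s.siftedSum ≤ s.totalMass / selbergSum s R +
      ∑ d₁ ∈ selbergSupport s R, ∑ d₂ ∈ selbergSupport s R, |s.rem (d₁.lcm d₂)| := by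
  have hw (d : ℕ) (hd : d ∈ s.prodPrimes.divisors) :
      |selbergWeight s R d| ≤ if d ≤ R then 1 else 0 := by
    split_ifs with hdR
    · exact abs_selbergWeight_le_one hR (Nat.dvd_of_mem_divisors hd)
    · rw [selbergWeight_eq_zero fun h ↦ hdR (mem_selbergSupport.1 h).2, abs_zero]
  have herr : s.errSum (BoundingSieve.lambdaSquared (selbergWeight s R)) ≤
      ∑ d₁ ∈ selbergSupport s R, ∑ d₂ ∈ selbergSupport s R, |s.rem (d₁.lcm d₂)| := by
    simp only [selbergSupport, sum_filter]
    refine (errSum_lambdaSquared_le _).trans (sum_le_sum fun d₁ hd₁ ↦ ?_)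
    rw [ite_sum_zero]
    refine sum_le_sum fun d₂ hd₂ ↦ ?_
    calc |selbergWeight s R d₁| * |selbergWeight s R d₂| * |s.rem (d₁.lcm d₂)|
        ≤ (if d₁ ≤ R then 1 else 0) * (if d₂ ≤ R then 1 else 0) * |s.rem (d₁.lcm d₂)| := by
          gcongr
          exacts [hw d₁ hd₁, hw d₂ hd₂]
      _ = _ := by split_ifs <;> simp
  calc s.siftedSum
      ≤ s.totalMass * s.mainSum (BoundingSieve.lambdaSquared (selbergWeight s R)) +
          s.errSum (BoundingSieve.lambdaSquared (selbergWeight s R)) :=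
        BoundingSieve.siftedSum_le_mainSum_errSum_of_upperMoebius _
          (BoundingSieve.upperMoebius_lambdaSquared _ (selbergWeight_one hR))
    _ ≤ _ := by
        rw [mainSum_lambdaSquared_selbergWeight hR, mul_one_div]
        gcongr

end SelbergWeights

/-! ### Sieving by residue classes -/

section ResidueSieve

open ArithmeticFunction

-- Over the quotient blocks the count is exact; the last, partial block contributes at most `d`.
lemma abs_count_sub_le_of_periodic {p : ℕ → Prop} [DecidablePred p] {d : ℕ} (hd : 0 < d)
    (hp : Function.Periodic p d) (N : ℕ) :
    |(Nat.count p N : ℝ) - Nat.count p d / d * N| ≤ d := by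
  have hblocks (k r : ℕ) : Nat.count p (d * k + r) = k * Nat.count p d + Nat.count p r := by
    induction k with
    | zero => simp
    | succ k ih =>
      have hshift : Nat.count (fun j ↦ p (d + j)) (d * k + r) = Nat.count p (d * k + r) := by
        simp only [Nat.count_eq_card_filter_range]
        refine congrArg card (filter_congr fun j _ ↦ ?_)
        rw [add_comm d j, hp]
      rw [mul_add_one, add_right_comm, add_comm (d * k + r) d, Nat.count_add, hshift, ih]
      ring
  have hN : (N : ℝ) = d * (N / d : ℕ) + (N % d : ℕ) := mod_cast (Nat.div_add_mod N d).symm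
  have hcount : (Nat.count p N : ℝ) = (N / d : ℕ) * Nat.count p d + Nat.count p (N % d) := by
    exact_mod_cast (Nat.div_add_mod N d) ▸ hblocks (N / d) (N % d)
  have hpartial : (Nat.count p (N % d) : ℝ) ≤ d :=
    mod_cast (Nat.count_le p).trans (Nat.mod_lt N hd).le
  have hexpected : (Nat.count p d : ℝ) / d * (N % d : ℕ) ≤ d := by
    calc (Nat.count p d : ℝ) / d * (N % d : ℕ) ≤ d / d * d := by
          gcongr
          · exact_mod_cast Nat.count_le p
          · exact (Nat.mod_lt N hd).le
      _ = d := by field_simp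
  have hdiff : (Nat.count p N : ℝ) - Nat.count p d / d * N =
      Nat.count p (N % d) - Nat.count p d / d * (N % d : ℕ) := by
    rw [hcount, hN]
    field_simp
    ring
  rw [hdiff]
  exact abs_sub_le_of_nonneg_of_le (Nat.cast_nonneg _) hpartial (by positivity) hexpected

lemma card_filter_range_prod_zmod (Ω : (q : ℕ) → Finset (ZMod q)) (s : Finset ℕ)
    (hs : (s : Set ℕ).Pairwise Nat.Coprime) (hs0 : 0 ∉ s) :
    #{n ∈ range (∏ q ∈ s, q) | ∀ q ∈ s, (n : ZMod q) ∈ Ω q} = ∏ q ∈ s, #(Ω q) := by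
  have hprod : ∏ q : s, (q : ℕ) = ∏ q ∈ s, q := prod_coe_sort s id
  have : NeZero (∏ q : s, (q : ℕ)) := ⟨prod_ne_zero_iff.2 fun q _ h ↦ hs0 (h ▸ q.2)⟩
  let e := ZMod.prodEquivPi (fun q : s ↦ (q : ℕ))
    fun q r hqr ↦ hs q.2 r.2 (Subtype.coe_injective.ne hqr)
  have he (n : ℕ) (q : s) : e n q = n := by rw [map_natCast, Pi.natCast_apply]
  rw [← hprod, ← prod_coe_sort s fun q ↦ #(Ω q), ← Fintype.card_piFinset]
  refine card_bij (fun n _ ↦ e n) ?_ ?_ ?_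
  · intro n hn
    rw [mem_filter] at hn
    exact Fintype.mem_piFinset.2 fun q ↦ he n q ▸ hn.2 q q.2
  · intro n hn n' hn' h
    rw [mem_filter, mem_range] at hn hn'
    exact ((ZMod.natCast_eq_natCast_iff _ _ _).1 (e.injective h)).eq_of_lt_of_lt hn.1 hn'.1
  · intro f hf
    have hval : e ((e.symm f).val : ℕ) = f := by rw [ZMod.natCast_zmod_val, e.apply_symm_apply]
    refine ⟨(e.symm f).val, mem_filter.2 ⟨mem_range.2 (ZMod.val_lt _), fun q hq ↦ ?_⟩, hval⟩
    rw [← he _ ⟨q, hq⟩, hval]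
    exact Fintype.mem_piFinset.1 hf ⟨q, hq⟩

variable (Ω : (q : ℕ) → Finset (ZMod q)) (P : ℕ)

/-- The product of the primes `q ∣ P` for which `n` falls into one of the forbidden classes `Ω q`.
The divisors of this number record which of the sieving conditions `n` violates, which turns sieving
by arbitrary residue classes into sieving by divisibility. -/
noncomputable def hitProduct (n : ℕ) : ℕ := ∏ q ∈ P.primeFactors with ((n : ZMod q) ∈ Ω q), q

variable {Ω P}

lemma primeFactors_hitProduct (n : ℕ) :
    (hitProduct Ω P n).primeFactors = P.primeFactors.filter fun q ↦ (n : ZMod q) ∈ Ω q :=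
  Nat.primeFactors_prod fun _ hq ↦ Nat.prime_of_mem_primeFactors (mem_filter.1 hq).1

lemma hitProduct_dvd (n : ℕ) : hitProduct Ω P n ∣ P :=
  (prod_dvd_prod_of_subset _ _ _ (filter_subset _ _)).trans (Nat.prod_primeFactors_dvd P)

lemma dvd_hitProduct_iff {d : ℕ} (hP : Squarefree P) (hd : d ∣ P) (n : ℕ) :
    d ∣ hitProduct Ω P n ↔ ∀ q ∈ d.primeFactors, (n : ZMod q) ∈ Ω q := by
  have hne : hitProduct Ω P n ≠ 0 := (hP.squarefree_of_dvd (hitProduct_dvd n)).ne_zero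
  constructor
  · intro h q hq
    have := Nat.primeFactors_mono h hne hq
    rw [primeFactors_hitProduct] at this
    exact (mem_filter.1 this).2
  · intro h
    rw [← Nat.prod_primeFactors_of_squarefree (hP.squarefree_of_dvd hd)]
    exact prod_dvd_prod_of_subset _ _ _ fun q hq ↦
      mem_filter.2 ⟨Nat.primeFactors_mono hd hP.ne_zero hq, h q hq⟩

lemma coprime_hitProduct_iff (hP : P ≠ 0) (n : ℕ) :
    P.Coprime (hitProduct Ω P n) ↔ ∀ q ∈ P.primeFactors, (n : ZMod q) ∉ Ω q := by
  rw [← Nat.disjoint_primeFactors hP (ne_zero_of_dvd_ne_zero hP (hitProduct_dvd n)),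
    primeFactors_hitProduct, disjoint_left]
  simp only [mem_filter, not_and]
  exact forall₂_congr fun q hq ↦ forall_prop_of_true hq

lemma abs_card_hitProduct_dvd_sub_le (hP : Squarefree P) {d : ℕ} (hd : d ∣ P) (N : ℕ) :
    |(#{n ∈ range N | d ∣ hitProduct Ω P n} : ℝ) - (∏ q ∈ d.primeFactors, (#(Ω q) : ℝ) / q) * N| ≤
      d := by
  have hsq : Squarefree d := hP.squarefree_of_dvd hd
  have hprod : ∏ q ∈ d.primeFactors, q = d := Nat.prod_primeFactors_of_squarefree hsq
  have hperiodic : Function.Periodic (fun n : ℕ ↦ ∀ q ∈ d.primeFactors, (n : ZMod q) ∈ Ω q) d := by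
    intro n
    refine propext (forall₂_congr fun q hq ↦ ?_)
    rw [Nat.cast_add, (ZMod.natCast_eq_zero_iff d q).2 (Nat.dvd_of_mem_primeFactors hq), add_zero]
  have hcount := card_filter_range_prod_zmod Ω d.primeFactors
    (fun q hq r hr ↦ (Nat.coprime_primes (Nat.prime_of_mem_primeFactors hq)
      (Nat.prime_of_mem_primeFactors hr)).2)
    fun h ↦ Nat.not_prime_zero (Nat.prime_of_mem_primeFactors h)
  have hbound := abs_count_sub_le_of_periodic hsq.ne_zero.bot_lt hperiodic N
  rw [hprod, ← Nat.count_eq_card_filter_range] at hcount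
  rw [hcount, Nat.count_eq_card_filter_range] at hbound
  rw [prod_div_distrib, ← Nat.cast_prod, ← Nat.cast_prod, hprod]
  simpa only [dvd_hitProduct_iff hP hd] using hbound

/-- The sieve problem of counting the `n < N` avoiding the residue classes `Ω q` for all primes
`q ∣ P`. The sifted elements are the numbers `hitProduct Ω P n`, counted with multiplicity. -/
noncomputable def residueSieve (hP : Squarefree P) (hΩ : ∀ q ∈ P.primeFactors, (Ω q).Nonempty)
    (hΩ_lt : ∀ q ∈ P.primeFactors, #(Ω q) < q) (N : ℕ) : BoundingSieve where
  support := P.divisors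
  prodPrimes := P
  prodPrimes_squarefree := hP
  weights v := #{n ∈ range N | hitProduct Ω P n = v}
  weights_nonneg _ := Nat.cast_nonneg _
  totalMass := N
  nu := prodPrimeFactors fun q ↦ (#(Ω q) : ℝ) / q
  nu_mult := IsMultiplicative.prodPrimeFactors _
  nu_pos_of_prime q hq hqP := by
    have := (hΩ q (hq.mem_primeFactors hqP hP.ne_zero)).card_pos
    have := hq.pos
    rw [prodPrimeFactors_apply hq.ne_zero, hq.primeFactors, prod_singleton]
    positivity
  nu_lt_one_of_prime q hq hqP := by
    rw [prodPrimeFactors_apply hq.ne_zero, hq.primeFactors, prod_singleton,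
      div_lt_one (mod_cast hq.pos)]
    exact_mod_cast hΩ_lt q (hq.mem_primeFactors hqP hP.ne_zero)

variable (hP : Squarefree P) (hΩ : ∀ q ∈ P.primeFactors, (Ω q).Nonempty)
  (hΩ_lt : ∀ q ∈ P.primeFactors, #(Ω q) < q) (N : ℕ)

lemma sum_residueSieve_weights (p : ℕ → Prop) [DecidablePred p] :
    (∑ v ∈ (residueSieve hP hΩ hΩ_lt N).support,
      if p v then (residueSieve hP hΩ hΩ_lt N).weights v else 0) =
        #{n ∈ range N | p (hitProduct Ω P n)} := by
  simp only [residueSieve, ← sum_filter]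
  rw [← Nat.cast_sum, sum_card_fiberwise_eq_card_filter]
  simp [hitProduct_dvd, hP.ne_zero]

lemma siftedSum_residueSieve :
    (residueSieve hP hΩ hΩ_lt N).siftedSum =
      #{n ∈ range N | ∀ q ∈ P.primeFactors, (n : ZMod q) ∉ Ω q} := by
  simp only [← coprime_hitProduct_iff hP.ne_zero]
  exact sum_residueSieve_weights hP hΩ hΩ_lt N P.Coprime

lemma abs_rem_residueSieve_le {d : ℕ} (hd : d ∣ P) :
    |(residueSieve hP hΩ hΩ_lt N).rem d| ≤ d := by
  have hmult : (residueSieve hP hΩ hΩ_lt N).multSum d =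
      #{n ∈ range N | d ∣ hitProduct Ω P n} := sum_residueSieve_weights hP hΩ hΩ_lt N (d ∣ ·)
  have hnu : (residueSieve hP hΩ hΩ_lt N).nu d = ∏ q ∈ d.primeFactors, (#(Ω q) : ℝ) / q :=
    prodPrimeFactors_apply (hP.squarefree_of_dvd hd).ne_zero
  rw [BoundingSieve.rem, hmult, hnu]
  exact abs_card_hitProduct_dvd_sub_le hP hd N

lemma selbergTerms_residueSieve {l : ℕ} (hl : l ∣ P) :
    (residueSieve hP hΩ hΩ_lt N).selbergTerms l =
      ∏ q ∈ l.primeFactors, (#(Ω q) : ℝ) / (q - #(Ω q)) := by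
  rw [BoundingSieve.selbergTerms_apply, ← BoundingSieve.prod_primeFactors_nu hl, ← prod_mul_distrib]
  refine prod_congr rfl fun q hq ↦ ?_
  have hq' := Nat.prime_of_mem_primeFactors hq
  have hq0 : (q : ℝ) ≠ 0 := mod_cast hq'.ne_zero
  have hnu : (residueSieve hP hΩ hΩ_lt N).nu q = #(Ω q) / q := by
    simp [residueSieve, prodPrimeFactors_apply hq'.ne_zero, hq'.primeFactors]
  rw [hnu, one_sub_div hq0, inv_div, div_mul_div_cancel₀ hq0]

theorem card_avoiding_residues_le (hP : Squarefree P)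
    (hΩ : ∀ q ∈ P.primeFactors, (Ω q).Nonempty) (hΩ_lt : ∀ q ∈ P.primeFactors, #(Ω q) < q)
    {R : ℕ} (hR : 1 ≤ R) :
    (#{n ∈ range N | ∀ q ∈ P.primeFactors, (n : ZMod q) ∉ Ω q} : ℝ) ≤
      N / (∑ l ∈ P.divisors with l ≤ R, ∏ q ∈ l.primeFactors, (#(Ω q) : ℝ) / (q - #(Ω q))) +
        R ^ 4 := by
  set s := residueSieve hP hΩ hΩ_lt N with hs
  have hsum : selbergSum s R =
      ∑ l ∈ P.divisors with l ≤ R, ∏ q ∈ l.primeFactors, (#(Ω q) : ℝ) / (q - #(Ω q)) :=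
    sum_congr rfl fun l hl ↦
      selbergTerms_residueSieve hP hΩ hΩ_lt N (Nat.dvd_of_mem_divisors (mem_filter.1 hl).1)
  have hcard : #(selbergSupport s R) ≤ R := by
    calc #(selbergSupport s R) ≤ #(Icc 1 R) := card_le_card fun l hl ↦ mem_Icc.2
          ⟨Nat.pos_of_mem_divisors (mem_filter.1 hl).1, (mem_filter.1 hl).2⟩
      _ = R := by simp
  have hrem : ∀ d₁ ∈ selbergSupport s R, ∀ d₂ ∈ selbergSupport s R,
      |s.rem (d₁.lcm d₂)| ≤ (R : ℝ) ^ 2 := by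
    intro d₁ hd₁ d₂ hd₂
    rw [mem_selbergSupport] at hd₁ hd₂
    have hlcm : d₁.lcm d₂ ≤ R ^ 2 := by
      calc d₁.lcm d₂ ≤ d₁ * d₂ := Nat.div_le_self _ _
        _ ≤ R ^ 2 := (Nat.mul_le_mul hd₁.2 hd₂.2).trans_eq (sq R).symm
    exact (abs_rem_residueSieve_le hP hΩ hΩ_lt N (Nat.lcm_dvd hd₁.1 hd₂.1)).trans
      (mod_cast hlcm)
  rw [← siftedSum_residueSieve hP hΩ hΩ_lt N, ← hsum, ← hs]
  refine (siftedSum_le_totalMass_div_selbergSum_add hR).trans (add_le_add_right ?_ _)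
  calc ∑ d₁ ∈ selbergSupport s R, ∑ d₂ ∈ selbergSupport s R, |s.rem (d₁.lcm d₂)|
      ≤ ∑ _ ∈ selbergSupport s R, ∑ _ ∈ selbergSupport s R, (R : ℝ) ^ 2 :=
        sum_le_sum fun d₁ hd₁ ↦ sum_le_sum fun d₂ hd₂ ↦ hrem d₁ hd₁ d₂ hd₂
    _ = #(selbergSupport s R) * (#(selbergSupport s R) * (R : ℝ) ^ 2) := by
        simp only [sum_const, nsmul_eq_mul]
    _ ≤ R * (R * (R : ℝ) ^ 2) := by gcongr
    _ = R ^ 4 := by ring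

end ResidueSieve

/-! ### Completely multiplicative functions -/

section CompletelyMultiplicative

open UniqueFactorizationMonoid

/-- The completely multiplicative function with prescribed values at the primes. -/
noncomputable def completelyMult (c : ℕ → ℝ) : ℕ →*₀ ℝ where
  toFun n := if n = 0 then 0 else (n.primeFactorsList.map c).prod
  map_zero' := if_pos rfl
  map_one' := by simp
  map_mul' m n := by
    rcases eq_or_ne m 0 with rfl | hm
    · simp
    rcases eq_or_ne n 0 with rfl | hn
    · simp
    rw [if_neg (mul_ne_zero hm hn), if_neg hm, if_neg hn, ← List.prod_append, ← List.map_append]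
    exact ((Nat.perm_primeFactorsList_mul hm hn).map c).prod_eq

lemma completelyMult_of_ne_zero (c : ℕ → ℝ) {n : ℕ} (hn : n ≠ 0) :
    completelyMult c n = (n.primeFactorsList.map c).prod :=
  if_neg hn

lemma completelyMult_prime (c : ℕ → ℝ) {q : ℕ} (hq : q.Prime) : completelyMult c q = c q := by
  rw [completelyMult_of_ne_zero c hq.ne_zero, Nat.primeFactorsList_prime hq, List.map_singleton,
    List.prod_singleton]

lemma completelyMult_nonneg {c : ℕ → ℝ} (hc : ∀ q, 0 ≤ c q) (n : ℕ) : 0 ≤ completelyMult c n := by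
  rcases eq_or_ne n 0 with rfl | hn
  · rw [map_zero]
  · rw [completelyMult_of_ne_zero c hn]
    refine List.prod_nonneg fun x hx ↦ ?_
    obtain ⟨q, -, rfl⟩ := List.mem_map.1 hx
    exact hc q

lemma completelyMult_eq_inv {c : ℕ → ℝ} {n : ℕ} (hn : n ≠ 0)
    (hc : ∀ q ∈ n.primeFactors, c q = (q : ℝ)⁻¹) : completelyMult c n = (n : ℝ)⁻¹ := by
  have hmap : n.primeFactorsList.map c = n.primeFactorsList.map fun q : ℕ ↦ (q : ℝ)⁻¹ :=
    List.map_congr_left fun q hq ↦ hc q (List.mem_toFinset.2 hq)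
  rw [completelyMult_of_ne_zero c hn, hmap]
  conv_rhs => rw [← Nat.prod_primeFactorsList hn]
  rw [Nat.cast_list_prod, List.prod_inv, List.map_map, Function.comp_def]

variable {f g h : ℕ →*₀ ℝ}

-- Writing `n = (∏ q ∈ s, q) * m`, the cofactors `m` are distinct and `s`-factored, so the sum of
-- `f m` is at most the Euler product over `s`.
lemma sum_le_prod_div_one_sub_of_primeFactors_eq (hf : ∀ n, 0 ≤ f n)
    (hf_lt : ∀ {q : ℕ}, q.Prime → f q < 1) {s t : Finset ℕ}
    (ht : ∀ n ∈ t, n ≠ 0 ∧ n.primeFactors = s) (hs : ∀ q ∈ s, q.Prime) :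
    ∑ n ∈ t, f n ≤ ∏ q ∈ s, f q / (1 - f q) := by
  set r := ∏ q ∈ s, q
  have hr0 : 0 < r := prod_pos fun q hq ↦ (hs q hq).pos
  have hdvd : ∀ n ∈ t, r ∣ n := fun n hn ↦ by
    simpa only [(ht n hn).2] using Nat.prod_primeFactors_dvd n
  have hinj : Set.InjOn (· / r) (t : Set ℕ) := fun a ha b hb hab ↦ by
    rw [← Nat.div_mul_cancel (hdvd a ha), ← Nat.div_mul_cancel (hdvd b hb)]
    exact congrArg (· * r) hab
  have hfactored : ∀ m ∈ t.image (· / r), m ∈ Nat.factoredNumbers s := by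
    intro m hm
    obtain ⟨n, hn, rfl⟩ := mem_image.1 hm
    obtain ⟨hn0, rfl⟩ := ht n hn
    exact Nat.mem_factoredNumbers_of_dvd
      (Nat.mem_factoredNumbers_of_primeFactors_subset hn0 subset_rfl)
      (Nat.div_dvd_of_dvd (hdvd n hn))
  have hnorm {q : ℕ} (hq : q.Prime) : ‖(f : ℕ →* ℝ) q‖ < 1 := by
    simpa [Real.norm_eq_abs, abs_of_nonneg (hf q)] using hf_lt hq
  have heuler : HasSum (fun m : Nat.factoredNumbers s ↦ f m) (∏ q ∈ s with q.Prime, (1 - f q)⁻¹) :=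
    (EulerProduct.summable_and_hasSum_factoredNumbers_prod_filter_prime_geometric hnorm s).2
  have hcofactors : ∑ m ∈ t.image (· / r), f m ≤ ∏ q ∈ s, (1 - f q)⁻¹ := by
    rw [← sum_subtype_of_mem f hfactored]
    rw [filter_true_of_mem hs] at heuler
    exact sum_le_hasSum _ (fun m _ ↦ hf m.1) heuler
  calc ∑ n ∈ t, f n = f r * ∑ m ∈ t.image (· / r), f m := by
        rw [sum_image hinj, mul_sum]
        exact sum_congr rfl fun n hn ↦ by rw [← map_mul, Nat.mul_div_cancel' (hdvd n hn)]
    _ ≤ f r * ∏ q ∈ s, (1 - f q)⁻¹ := by gcongr; exact hf r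
    _ = ∏ q ∈ s, f q / (1 - f q) := by
        rw [map_prod, ← prod_mul_distrib]
        exact prod_congr rfl fun q _ ↦ (div_eq_mul_inv _ _).symm

lemma sum_Icc_le_sum_squarefree_prod (hf : ∀ n, 0 ≤ f n)
    (hf_lt : ∀ {q : ℕ}, q.Prime → f q < 1) (R : ℕ) :
    ∑ n ∈ Icc 1 R, f n ≤
      ∑ l ∈ Icc 1 R with Squarefree l, ∏ q ∈ l.primeFactors, f q / (1 - f q) := by
  have hmaps : ∀ n ∈ Icc 1 R, radical n ∈ (Icc 1 R).filter Squarefree := by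
    intro n hn
    rw [mem_Icc] at hn
    have hdvd : radical n ∣ n := radical_dvd_self
    exact mem_filter.2 ⟨mem_Icc.2 ⟨Nat.pos_of_dvd_of_pos hdvd hn.1,
      (Nat.le_of_dvd hn.1 hdvd).trans hn.2⟩, squarefree_radical⟩
  rw [← sum_fiberwise_of_maps_to hmaps]
  refine sum_le_sum fun l _ ↦ sum_le_prod_div_one_sub_of_primeFactors_eq hf hf_lt (fun n hn ↦ ?_)
    fun q hq ↦ Nat.prime_of_mem_primeFactors hq
  rw [mem_filter, mem_Icc] at hn
  exact ⟨Nat.one_le_iff_ne_zero.1 hn.1.1, by rw [← hn.2, Nat.primeFactors_radical]⟩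

lemma sum_divisorsAntidiagonal_mul_le (hf : ∀ n, 0 ≤ f n) (hg : ∀ n, 0 ≤ g n)
    (hfg : ∀ {q : ℕ}, q.Prime → f q + g q ≤ h q) (n : ℕ) :
    ∑ x ∈ n.divisorsAntidiagonal, f x.1 * g x.2 ≤ h n := by
  induction n using induction_on_primes with
  | zero => simp
  | one => simp
  | prime_mul q n hq ih =>
    have hq0 : q ≠ 0 := hq.ne_zero
    set left := n.divisorsAntidiagonal.image fun x ↦ (q * x.1, x.2)
    set right := n.divisorsAntidiagonal.image fun x ↦ (x.1, q * x.2)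
    have hsub : (q * n).divisorsAntidiagonal ⊆ left ∪ right := by
      rintro ⟨a, b⟩ hab
      obtain ⟨hab, hqn⟩ := Nat.mem_divisorsAntidiagonal.1 hab
      have hn0 := right_ne_zero_of_mul hqn
      rcases hq.dvd_mul.1 (Dvd.intro n hab.symm) with ⟨a, rfl⟩ | ⟨b, rfl⟩
      · refine mem_union_left _ (mem_image.2 ⟨(a, b), ?_, rfl⟩)
        rw [Nat.mem_divisorsAntidiagonal]
        exact ⟨mul_left_cancel₀ hq0 (by rw [← mul_assoc]; exact hab), hn0⟩
      · refine mem_union_right _ (mem_image.2 ⟨(a, b), ?_, rfl⟩)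
        rw [Nat.mem_divisorsAntidiagonal]
        exact ⟨mul_left_cancel₀ hq0 (by rw [mul_left_comm]; exact hab), hn0⟩
    have hnonneg (x : ℕ × ℕ) : 0 ≤ f x.1 * g x.2 := mul_nonneg (hf _) (hg _)
    have hleft : ∑ x ∈ left, f x.1 * g x.2 =
        f q * ∑ x ∈ n.divisorsAntidiagonal, f x.1 * g x.2 := by
      rw [sum_image fun x _ y _ hxy ↦ by simpa [hq0, Prod.ext_iff] using hxy, mul_sum]
      simp only [map_mul, mul_assoc]
    have hright : ∑ x ∈ right, f x.1 * g x.2 =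
        g q * ∑ x ∈ n.divisorsAntidiagonal, f x.1 * g x.2 := by
      rw [sum_image fun x _ y _ hxy ↦ by simpa [hq0, Prod.ext_iff] using hxy, mul_sum]
      simp only [map_mul, mul_left_comm]
    calc ∑ x ∈ (q * n).divisorsAntidiagonal, f x.1 * g x.2
        ≤ ∑ x ∈ left ∪ right, f x.1 * g x.2 :=
          sum_le_sum_of_subset_of_nonneg hsub fun x _ _ ↦ hnonneg x
      _ ≤ ∑ x ∈ left, f x.1 * g x.2 + ∑ x ∈ right, f x.1 * g x.2 := by
          rw [← sum_union_inter]
          exact le_add_of_nonneg_right (sum_nonneg fun x _ ↦ hnonneg x)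
      _ = (f q + g q) * ∑ x ∈ n.divisorsAntidiagonal, f x.1 * g x.2 := by
          rw [hleft, hright, add_mul]
      _ ≤ h q * h n := mul_le_mul (hfg hq) ih (sum_nonneg fun x _ ↦ hnonneg x)
          ((add_nonneg (hf q) (hg q)).trans (hfg hq))
      _ = h (q * n) := (map_mul h q n).symm

lemma sum_Icc_mul_sum_Icc_le (hf : ∀ n, 0 ≤ f n) (hg : ∀ n, 0 ≤ g n)
    (hfg : ∀ {q : ℕ}, q.Prime → f q + g q ≤ h q) (A B : ℕ) :
    (∑ a ∈ Icc 1 A, f a) * ∑ b ∈ Icc 1 B, g b ≤ ∑ n ∈ Icc 1 (A * B), h n := by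
  have hmaps : ∀ x ∈ Icc 1 A ×ˢ Icc 1 B, x.1 * x.2 ∈ Icc 1 (A * B) := by
    intro x hx
    simp only [mem_product, mem_Icc] at hx ⊢
    exact ⟨Nat.mul_pos hx.1.1 hx.2.1, Nat.mul_le_mul hx.1.2 hx.2.2⟩
  rw [sum_mul_sum, ← sum_product', ← sum_fiberwise_of_maps_to hmaps]
  refine sum_le_sum fun n hn ↦ ?_
  refine (sum_le_sum_of_subset_of_nonneg (fun x hx ↦ ?_) fun x _ _ ↦
    mul_nonneg (hf x.1) (hg x.2)).trans (sum_divisorsAntidiagonal_mul_le hf hg hfg n)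
  exact Nat.mem_divisorsAntidiagonal.2
    ⟨(mem_filter.1 hx).2, Nat.one_le_iff_ne_zero.1 (mem_Icc.1 hn).1⟩

end CompletelyMultiplicative

/-! ### Sums of reciprocals and of reciprocal totients -/

section ReciprocalSums

open UniqueFactorizationMonoid

lemma sum_filter_dvd_inv (d : ℕ) (s : Finset ℕ) :
    ∑ n ∈ s with d ∣ n, (n : ℝ)⁻¹ =
      (d : ℝ)⁻¹ * ∑ k ∈ {n ∈ s | d ∣ n}.image (· / d), (k : ℝ)⁻¹ := by
  have hdvd : ∀ n ∈ s.filter (d ∣ ·), d * (n / d) = n := fun n hn ↦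
    Nat.mul_div_cancel' (mem_filter.1 hn).2
  rw [sum_image fun a ha b hb hab ↦ by
    rw [← hdvd a ha, ← hdvd b hb]; exact congrArg (d * ·) hab, mul_sum]
  refine sum_congr rfl fun n hn ↦ ?_
  rw [← mul_inv, ← Nat.cast_mul, hdvd n hn]

lemma prod_one_sub_inv_mul_sum_inv_le {s : Finset ℕ} (hs : ∀ q ∈ s, q ≠ 0) (N : ℕ) :
    (∏ q ∈ s, (1 - (q : ℝ)⁻¹)) * ∑ n ∈ Icc 1 N, (n : ℝ)⁻¹ ≤
      ∑ n ∈ Icc 1 N with ∀ q ∈ s, ¬ q ∣ n, (n : ℝ)⁻¹ := by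
  induction s using Finset.induction_on with
  | empty => simp
  | insert r s hr ih =>
    rw [forall_mem_insert] at hs
    set a := {n ∈ Icc 1 N | ∀ q ∈ s, ¬ q ∣ n} with ha
    have hmultiples : ∑ n ∈ a with r ∣ n, (n : ℝ)⁻¹ ≤ (r : ℝ)⁻¹ * ∑ n ∈ a, (n : ℝ)⁻¹ := by
      rw [sum_filter_dvd_inv]
      gcongr
      refine image_subset_iff.2 fun n hn ↦ ?_
      simp only [ha, mem_filter, mem_Icc] at hn ⊢
      obtain ⟨⟨⟨hn_pos, hnN⟩, hns⟩, hrn⟩ := hn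
      exact ⟨⟨Nat.div_pos (Nat.le_of_dvd hn_pos hrn) hs.1.bot_lt, (Nat.div_le_self n r).trans hnN⟩,
        fun q hq hqn ↦ hns q hq (hqn.trans (Nat.div_dvd_of_dvd hrn))⟩
    have hinsert : {n ∈ Icc 1 N | ∀ q ∈ insert r s, ¬ q ∣ n} = {n ∈ a | ¬ r ∣ n} := by
      simp only [ha, filter_filter, forall_mem_insert, and_comm]
    have hr_nonneg : 0 ≤ 1 - (r : ℝ)⁻¹ := sub_nonneg.2 (Nat.cast_inv_le_one r)
    calc (∏ q ∈ insert r s, (1 - (q : ℝ)⁻¹)) * ∑ n ∈ Icc 1 N, (n : ℝ)⁻¹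
        = (1 - (r : ℝ)⁻¹) * ((∏ q ∈ s, (1 - (q : ℝ)⁻¹)) * ∑ n ∈ Icc 1 N, (n : ℝ)⁻¹) := by
          rw [prod_insert hr, mul_assoc]
      _ ≤ (1 - (r : ℝ)⁻¹) * ∑ n ∈ a, (n : ℝ)⁻¹ := by gcongr; exact ih hs.2
      _ = ∑ n ∈ a, (n : ℝ)⁻¹ - (r : ℝ)⁻¹ * ∑ n ∈ a, (n : ℝ)⁻¹ := by ring
      _ ≤ ∑ n ∈ a, (n : ℝ)⁻¹ - ∑ n ∈ a with r ∣ n, (n : ℝ)⁻¹ := by gcongr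
      _ = ∑ n ∈ Icc 1 N with ∀ q ∈ insert r s, ¬ q ∣ n, (n : ℝ)⁻¹ := by
          rw [hinsert, ← sum_filter_add_sum_filter_not a (r ∣ ·), add_sub_cancel_left]

lemma totient_div_self {k : ℕ} (hk : k ≠ 0) :
    (k.totient : ℝ) / k = ∏ q ∈ k.primeFactors, (1 - (q : ℝ)⁻¹) := by
  have htotient := congrArg (Rat.cast (K := ℝ)) (Nat.totient_eq_mul_prod_factors k)
  push_cast at htotient
  rw [htotient, mul_div_cancel_left₀ _ (Nat.cast_ne_zero.2 hk)]

lemma log_add_one_le_sum_inv (N : ℕ) : Real.log (N + 1) ≤ ∑ n ∈ Icc 1 N, (n : ℝ)⁻¹ := by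
  simpa [harmonic_eq_sum_Icc] using log_add_one_le_harmonic N

lemma totient_div_self_mul_log_le {k : ℕ} (hk : k ≠ 0) (N : ℕ) :
    (k.totient : ℝ) / k * Real.log (N + 1) ≤
      ∑ n ∈ Icc 1 N with ∀ q ∈ k.primeFactors, ¬ q ∣ n, (n : ℝ)⁻¹ := by
  refine le_trans ?_ (prod_one_sub_inv_mul_sum_inv_le
    (fun q hq ↦ (Nat.prime_of_mem_primeFactors hq).ne_zero) N)
  rw [← totient_div_self hk]
  gcongr
  exact log_add_one_le_sum_inv N

lemma prod_Icc_one_sub_inv_sq (n : ℕ) :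
    ∏ q ∈ Icc 2 (n + 1), (1 - ((q : ℝ) ^ 2)⁻¹) = (n + 2) / (2 * (n + 1)) := by
  induction n with
  | zero => simp
  | succ n ih =>
    rw [prod_Icc_succ_top (by lia), ih]
    push_cast
    field_simp
    ring

lemma one_half_le_prod_one_sub_inv_sq {s : Finset ℕ} (hs : ∀ q ∈ s, 2 ≤ q) :
    1 / 2 ≤ ∏ q ∈ s, (1 - ((q : ℝ) ^ 2)⁻¹) := by
  set n := s.sup id
  have hsub : s ⊆ Icc 2 (n + 1) := fun q hq ↦
    mem_Icc.2 ⟨hs q hq, (le_sup (f := id) hq).trans n.le_succ⟩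
  have hnonneg {q : ℕ} (hq : 2 ≤ q) : 0 ≤ 1 - ((q : ℝ) ^ 2)⁻¹ :=
    sub_nonneg.2 (inv_le_one_of_one_le₀ (one_le_pow₀ (Nat.one_le_cast.2 (by lia))))
  calc (1 : ℝ) / 2 ≤ (n + 2) / (2 * (n + 1)) := by
        rw [div_le_div_iff₀ two_pos (by positivity)]
        linarith
    _ = ∏ q ∈ Icc 2 (n + 1), (1 - ((q : ℝ) ^ 2)⁻¹) := (prod_Icc_one_sub_inv_sq n).symm
    _ ≤ ∏ q ∈ s, (1 - ((q : ℝ) ^ 2)⁻¹) :=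
        prod_le_prod_of_subset_of_le_one hsub (fun q hq ↦ hnonneg (mem_Icc.1 hq).1)
          fun q _ _ ↦ sub_le_self _ (by positivity)

lemma prod_primeFactors_one_add_inv_le {m : ℕ} (hm : m ≠ 0) :
    ∏ q ∈ m.primeFactors, (1 + (q : ℝ)⁻¹) ≤ ∑ d ∈ m.divisors, (d : ℝ)⁻¹ := by
  let f : ArithmeticFunction ℝ := ⟨fun n ↦ (n : ℝ)⁻¹, by simp⟩
  have hf : f.IsMultiplicative := ⟨by simp [f], fun {a b} _ ↦ by simp [f, mul_comm]⟩
  calc ∏ q ∈ m.primeFactors, (1 + (q : ℝ)⁻¹)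
      = ∑ d ∈ (radical m).divisors, (d : ℝ)⁻¹ := by
        rw [← Nat.primeFactors_radical]
        exact hf.prodPrimeFactors_one_add_of_squarefree squarefree_radical
    _ ≤ ∑ d ∈ m.divisors, (d : ℝ)⁻¹ :=
        sum_le_sum_of_subset_of_nonneg (Nat.divisors_subset_of_dvd hm radical_dvd_self)
          fun _ _ _ ↦ by positivity

lemma inv_totient_le {m : ℕ} (hm : m ≠ 0) :
    (m.totient : ℝ)⁻¹ ≤ 2 * (m : ℝ)⁻¹ * ∑ d ∈ m.divisors, (d : ℝ)⁻¹ := by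
  have hφ : (0 : ℝ) < m.totient := Nat.cast_pos.2 (Nat.totient_pos.2 hm.bot_lt)
  have hhalf : 1 / 2 ≤ (m.totient : ℝ) / m * ∑ d ∈ m.divisors, (d : ℝ)⁻¹ :=
    calc (1 : ℝ) / 2 ≤ ∏ q ∈ m.primeFactors, (1 - ((q : ℝ) ^ 2)⁻¹) :=
          one_half_le_prod_one_sub_inv_sq fun q hq ↦ (Nat.prime_of_mem_primeFactors hq).two_le
      _ = (m.totient : ℝ) / m * ∏ q ∈ m.primeFactors, (1 + (q : ℝ)⁻¹) := by
          rw [totient_div_self hm, ← prod_mul_distrib]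
          exact prod_congr rfl fun q _ ↦ by ring
      _ ≤ (m.totient : ℝ) / m * ∑ d ∈ m.divisors, (d : ℝ)⁻¹ := by
          gcongr
          exact prod_primeFactors_one_add_inv_le hm
  rw [inv_le_iff_one_le_mul₀ hφ]
  calc 1 ≤ 2 * ((m.totient : ℝ) / m * ∑ d ∈ m.divisors, (d : ℝ)⁻¹) := by linarith
    _ = 2 * (m : ℝ)⁻¹ * (∑ d ∈ m.divisors, (d : ℝ)⁻¹) * m.totient := by ring

lemma sum_Icc_inv_le_one_add_log {a b : ℕ} (ha : 0 < a) (hab : a ≤ b) :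
    ∑ k ∈ Icc a b, (k : ℝ)⁻¹ ≤ 1 + Real.log (b / a) := by
  have ha0 : (0 : ℝ) < a := Nat.cast_pos.2 ha
  induction b, hab using Nat.le_induction with
  | base => simpa [div_self ha0.ne'] using Nat.cast_inv_le_one a
  | succ b hab ih =>
    have hb : (0 : ℝ) < b := Nat.cast_pos.2 (ha.trans_le hab)
    have hstep : ((b : ℝ) + 1)⁻¹ ≤ Real.log ((b + 1) / b) := by
      have := Real.one_sub_inv_le_log_of_pos (show 0 < ((b : ℝ) + 1) / b by positivity)
      convert this using 1
      field_simp
      ring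
    calc ∑ k ∈ Icc a (b + 1), (k : ℝ)⁻¹
        = ∑ k ∈ Icc a b, (k : ℝ)⁻¹ + ((b : ℝ) + 1)⁻¹ := by
          rw [sum_Icc_succ_top (by lia), Nat.cast_succ]
      _ ≤ 1 + Real.log (b / a) + Real.log ((b + 1) / b) := add_le_add ih hstep
      _ = 1 + Real.log ((b + 1 : ℕ) / a) := by
          rw [add_assoc, ← Real.log_mul (by positivity) (by positivity), mul_comm,
            div_mul_div_cancel₀ hb.ne', Nat.cast_succ]

variable {s : Finset ℕ} {K : ℝ}

lemma sum_inv_le_one_add_log (hs : ∀ a ∈ s, 0 < a) (hK : 1 ≤ K)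
    (hsK : ∀ a ∈ s, ∀ b ∈ s, (b : ℝ) ≤ K * a) : ∑ k ∈ s, (k : ℝ)⁻¹ ≤ 1 + Real.log K := by
  rcases s.eq_empty_or_nonempty with rfl | hne
  · rw [sum_empty]
    exact add_nonneg zero_le_one (Real.log_nonneg hK)
  have ha := s.min'_mem hne
  have hb := s.max'_mem hne
  have ha0 : (0 : ℝ) < s.min' hne := Nat.cast_pos.2 (hs _ ha)
  have hb0 : (0 : ℝ) < s.max' hne := Nat.cast_pos.2 (hs _ hb)
  calc ∑ k ∈ s, (k : ℝ)⁻¹ ≤ ∑ k ∈ Icc (s.min' hne) (s.max' hne), (k : ℝ)⁻¹ :=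
        sum_le_sum_of_subset_of_nonneg
          (fun k hk ↦ mem_Icc.2 ⟨s.min'_le k hk, s.le_max' k hk⟩) fun _ _ _ ↦ by positivity
    _ ≤ 1 + Real.log (s.max' hne / s.min' hne) :=
        sum_Icc_inv_le_one_add_log (hs _ ha) (s.min'_le _ hb)
    _ ≤ 1 + Real.log K := by
        gcongr
        exact (div_le_iff₀ ha0).2 (hsK _ ha _ hb)

lemma sum_filter_dvd_inv_le (hs : ∀ a ∈ s, 0 < a) (hK : 1 ≤ K)
    (hsK : ∀ a ∈ s, ∀ b ∈ s, (b : ℝ) ≤ K * a) {d : ℕ} (hd : d ≠ 0) :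
    ∑ m ∈ s with d ∣ m, (m : ℝ)⁻¹ ≤ (d : ℝ)⁻¹ * (1 + Real.log K) := by
  have hd0 : (0 : ℝ) < d := Nat.cast_pos.2 hd.bot_lt
  rw [sum_filter_dvd_inv]
  gcongr
  refine sum_inv_le_one_add_log (forall_mem_image.2 fun a ha ↦ ?_) hK
    (forall_mem_image.2 fun a ha ↦ forall_mem_image.2 fun b hb ↦ ?_)
  · rw [mem_filter] at ha
    exact Nat.div_pos (Nat.le_of_dvd (hs a ha.1) ha.2) hd.bot_lt
  · rw [mem_filter] at ha hb
    rw [Nat.cast_div hb.2 hd0.ne', Nat.cast_div ha.2 hd0.ne', ← mul_div_assoc]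
    gcongr
    exact hsK a ha.1 b hb.1

lemma sum_inv_totient_le (hs : ∀ a ∈ s, 0 < a) (hK : 1 ≤ K)
    (hsK : ∀ a ∈ s, ∀ b ∈ s, (b : ℝ) ≤ K * a) :
    ∑ m ∈ s, (m.totient : ℝ)⁻¹ ≤ 4 * (1 + Real.log K) := by
  set D := s.sup id
  have hdivisors : ∀ m ∈ s, m.divisors ⊆ {d ∈ Ioo 0 (D + 1) | d ∣ m} := fun m hm d hd ↦ by
    have hdm := Nat.dvd_of_mem_divisors hd
    have hmD : m ≤ D := le_sup (f := id) hm
    exact mem_filter.2 ⟨mem_Ioo.2 ⟨Nat.pos_of_mem_divisors hd,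
      Nat.lt_succ_of_le ((Nat.le_of_dvd (hs m hm) hdm).trans hmD)⟩, hdm⟩
  calc ∑ m ∈ s, (m.totient : ℝ)⁻¹
      ≤ ∑ m ∈ s, ∑ d ∈ Ioo 0 (D + 1) with d ∣ m, 2 * (m : ℝ)⁻¹ * (d : ℝ)⁻¹ := by
        refine sum_le_sum fun m hm ↦ (inv_totient_le (hs m hm).ne').trans ?_
        rw [mul_sum]
        exact sum_le_sum_of_subset_of_nonneg (hdivisors m hm) fun _ _ _ ↦ by positivity
    _ = ∑ d ∈ Ioo 0 (D + 1), 2 * (d : ℝ)⁻¹ * ∑ m ∈ s with d ∣ m, (m : ℝ)⁻¹ := by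
        simp only [sum_filter, mul_sum]
        rw [sum_comm]
        refine sum_congr rfl fun d _ ↦ sum_congr rfl fun m _ ↦ ?_
        split_ifs <;> ring
    _ ≤ ∑ d ∈ Ioo 0 (D + 1), 2 * (d : ℝ)⁻¹ * ((d : ℝ)⁻¹ * (1 + Real.log K)) := by
        refine sum_le_sum fun d hd ↦ ?_
        gcongr
        exact sum_filter_dvd_inv_le hs hK hsK (mem_Ioo.1 hd).1.ne'
    _ = 2 * (1 + Real.log K) * ∑ d ∈ Ioo 0 (D + 1), ((d : ℝ) ^ 2)⁻¹ := by
        rw [mul_sum]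
        exact sum_congr rfl fun d _ ↦ by ring
    _ ≤ 2 * (1 + Real.log K) * 2 := by
        have := Real.log_nonneg hK
        gcongr
        simpa using sum_Ioo_inv_sq_le (α := ℝ) 0 (D + 1)
    _ = 4 * (1 + Real.log K) := by ring

lemma sum_inv_totient_le_mul_log (hs : ∀ a ∈ s, 0 < a) (hK : 2 ≤ K)
    (hsK : ∀ a ∈ s, ∀ b ∈ s, (b : ℝ) ≤ K * a) :
    ∑ m ∈ s, (m.totient : ℝ)⁻¹ ≤ 12 * Real.log K := by
  have hlog : Real.log 2 ≤ Real.log K := Real.log_le_log two_pos hK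
  have := sum_inv_totient_le hs (one_le_two.trans hK) hsK
  linarith [Real.log_two_gt_d9]

end ReciprocalSums

/-! ### Primes `p` for which `m * p - 1` has no small prime factor -/

section ShiftedPrimes

lemma divisors_primorial_filter_le (R : ℕ) :
    {l ∈ (primorial R).divisors | l ≤ R} = {l ∈ Icc 1 R | Squarefree l} := by
  ext l
  simp only [mem_filter, Nat.mem_divisors, mem_Icc]
  constructor
  · rintro ⟨⟨hdvd, -⟩, hle⟩
    exact ⟨⟨Nat.pos_of_dvd_of_pos hdvd (primorial_pos R), hle⟩,
      (squarefree_primorial R).squarefree_of_dvd hdvd⟩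
  · rintro ⟨⟨-, hle⟩, hsq⟩
    refine ⟨⟨hsq.dvd_primorial.trans ?_, (primorial_pos R).ne'⟩, hle⟩
    exact prod_dvd_prod_of_subset _ _ _ (filter_subset_filter _ (range_mono (by lia)))

/-- The residue classes modulo `q` to be avoided by a prime `n > q` for which `m * n - 1` is
coprime to the primes up to `Y` that do not divide `k`. -/
noncomputable def shiftedPrimeResidues (m k Y q : ℕ) : Finset (ZMod q) :=
  if q ≤ Y ∧ ¬ q ∣ k then {0, (m : ZMod q)⁻¹} else {0}

/-- The density of `shiftedPrimeResidues m k Y q` is the sum of `q⁻¹`, for the class of `0`, and of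
`shiftDensity k Y q`, for the class of `m⁻¹`. -/
noncomputable def shiftDensity (k Y q : ℕ) : ℝ := if q ≤ Y ∧ ¬ q ∣ k then (q : ℝ)⁻¹ else 0

lemma shiftDensity_nonneg (k Y q : ℕ) : 0 ≤ shiftDensity k Y q := by
  unfold shiftDensity
  positivity

variable {m k : ℕ} (Y : ℕ)

lemma shiftedPrimeResidues_nonempty (q : ℕ) : (shiftedPrimeResidues m k Y q).Nonempty := by
  unfold shiftedPrimeResidues
  split_ifs
  exacts [insert_nonempty _ _, singleton_nonempty _]

lemma inv_add_shiftDensity_lt_one {q : ℕ} (hq : q.Prime) (h2k : 2 ∣ k) :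
    (q : ℝ)⁻¹ + shiftDensity k Y q < 1 := by
  have hq0 : (0 : ℝ) < q := Nat.cast_pos.2 hq.pos
  unfold shiftDensity
  split_ifs with h
  · have hq2 : 2 < q := lt_of_le_of_ne hq.two_le fun h2q ↦ h.2 (h2q ▸ h2k)
    rw [← two_mul, mul_inv_lt_iff₀ hq0, one_mul]
    exact_mod_cast hq2
  · rw [add_zero]
    exact inv_lt_one_of_one_lt₀ (Nat.one_lt_cast.2 hq.one_lt)

lemma natCast_zmod_ne_zero_of_dvd {q : ℕ} (hmk : m ∣ k) (hqk : ¬ q ∣ k) : (m : ZMod q) ≠ 0 := by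
  rw [Ne, ZMod.natCast_eq_zero_iff]
  exact fun hqm ↦ hqk (hqm.trans hmk)

lemma card_shiftedPrimeResidues {q : ℕ} (hq : q.Prime) (hmk : m ∣ k) :
    (#(shiftedPrimeResidues m k Y q) : ℝ) = q * ((q : ℝ)⁻¹ + shiftDensity k Y q) := by
  have := Fact.mk hq
  have hq0 : (q : ℝ) ≠ 0 := Nat.cast_ne_zero.2 hq.ne_zero
  unfold shiftedPrimeResidues shiftDensity
  split_ifs with h
  · rw [card_pair (inv_ne_zero (natCast_zmod_ne_zero_of_dvd hmk h.2)).symm, mul_add,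
      mul_inv_cancel₀ hq0, one_add_one_eq_two, Nat.cast_two]
  · rw [card_singleton, add_zero, mul_inv_cancel₀ hq0, Nat.cast_one]

lemma card_shiftedPrimeResidues_lt {q : ℕ} (hq : q.Prime) (hmk : m ∣ k) (h2k : 2 ∣ k) :
    #(shiftedPrimeResidues m k Y q) < q := by
  rw [← Nat.cast_lt (α := ℝ), card_shiftedPrimeResidues Y hq hmk]
  exact mul_lt_of_lt_one_right (Nat.cast_pos.2 hq.pos) (inv_add_shiftDensity_lt_one Y hq h2k)

lemma natCast_notMem_shiftedPrimeResidues {q p : ℕ} (hq : q.Prime) (hm : 0 < m)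
    (hmk : m ∣ k) (hqp : ¬ q ∣ p) (hshift : q ≤ Y → ¬ q ∣ k → ¬ q ∣ m * p - 1) :
    (p : ZMod q) ∉ shiftedPrimeResidues m k Y q := by
  have := Fact.mk hq
  have hp_zero : (p : ZMod q) ≠ 0 := by rwa [Ne, ZMod.natCast_eq_zero_iff]
  have hp_pos : 0 < p := Nat.pos_of_ne_zero (by rintro rfl; exact hqp (dvd_zero q))
  unfold shiftedPrimeResidues
  split_ifs with h
  · rw [mem_insert, mem_singleton, not_or]
    refine ⟨hp_zero, fun hp_inv ↦ hshift h.1 h.2 ?_⟩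
    rw [← ZMod.natCast_eq_zero_iff, Nat.cast_sub (Nat.mul_pos hm hp_pos), Nat.cast_mul, hp_inv,
      mul_inv_cancel₀ (natCast_zmod_ne_zero_of_dvd hmk h.2), Nat.cast_one, sub_self]
  · rwa [mem_singleton]

lemma totient_div_self_mul_log_le_sum_completelyMult (hk : k ≠ 0) :
    (k.totient : ℝ) / k * Real.log (Y + 1) ≤
      ∑ n ∈ Icc 1 Y, completelyMult (shiftDensity k Y) n := by
  refine (totient_div_self_mul_log_le hk Y).trans ?_
  rw [sum_filter]
  refine sum_le_sum fun n hn ↦ ?_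
  rw [mem_Icc] at hn
  split_ifs with hcoprime
  · refine (completelyMult_eq_inv (by lia) fun q hq ↦ if_pos ⟨?_, fun hqk ↦ ?_⟩).ge
    · exact (Nat.le_of_mem_primeFactors hq).trans hn.2
    · exact hcoprime q (Nat.mem_primeFactors.2 ⟨Nat.prime_of_mem_primeFactors hq, hqk, hk⟩)
        (Nat.dvd_of_mem_primeFactors hq)
  · exact completelyMult_nonneg (shiftDensity_nonneg k Y) n

lemma log_mul_totient_div_self_mul_log_le (hk : k ≠ 0) (hmk : m ∣ k) (h2k : 2 ∣ k) (T : ℕ) :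
    Real.log (T + 1) * (k.totient / k * Real.log (Y + 1)) ≤
      ∑ l ∈ (primorial (T * Y)).divisors with l ≤ T * Y, ∏ q ∈ l.primeFactors,
        (#(shiftedPrimeResidues m k Y q) : ℝ) / (q - #(shiftedPrimeResidues m k Y q)) := by
  set f := completelyMult fun q : ℕ ↦ (q : ℝ)⁻¹
  set g := completelyMult (shiftDensity k Y)
  set h := completelyMult fun q ↦ (q : ℝ)⁻¹ + shiftDensity k Y q
  have hinv (q : ℕ) : 0 ≤ (q : ℝ)⁻¹ := by positivity
  have hf : ∀ n, 0 ≤ f n := completelyMult_nonneg hinv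
  have hg : ∀ n, 0 ≤ g n := completelyMult_nonneg (shiftDensity_nonneg k Y)
  have hh : ∀ n, 0 ≤ h n :=
    completelyMult_nonneg fun q ↦ add_nonneg (hinv q) (shiftDensity_nonneg k Y q)
  have hsum {q : ℕ} (hq : q.Prime) : f q + g q ≤ h q := by
    simp only [f, g, h, completelyMult_prime _ hq, le_refl]
  have hcard {q : ℕ} (hq : q.Prime) : (#(shiftedPrimeResidues m k Y q) : ℝ) = q * h q := by
    rw [card_shiftedPrimeResidues Y hq hmk, completelyMult_prime _ hq]
  have hh_lt {q : ℕ} (hq : q.Prime) : h q < 1 := by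
    rw [completelyMult_prime _ hq]
    exact inv_add_shiftDensity_lt_one Y hq h2k
  have hlog : Real.log (T + 1) ≤ ∑ n ∈ Icc 1 T, f n := by
    refine (log_add_one_le_sum_inv T).trans_eq (sum_congr rfl fun n hn ↦ ?_)
    exact (completelyMult_eq_inv (Nat.one_le_iff_ne_zero.1 (mem_Icc.1 hn).1) fun _ _ ↦ rfl).symm
  calc Real.log (T + 1) * (k.totient / k * Real.log (Y + 1))
      ≤ (∑ n ∈ Icc 1 T, f n) * ∑ n ∈ Icc 1 Y, g n := by
        have hlogY : 0 ≤ Real.log ((Y : ℝ) + 1) := Real.log_nonneg (by simp)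
        exact mul_le_mul hlog (totient_div_self_mul_log_le_sum_completelyMult Y hk)
          (by positivity) (sum_nonneg fun n _ ↦ hf n)
    _ ≤ ∑ n ∈ Icc 1 (T * Y), h n := sum_Icc_mul_sum_Icc_le hf hg hsum T Y
    _ ≤ ∑ l ∈ Icc 1 (T * Y) with Squarefree l, ∏ q ∈ l.primeFactors, h q / (1 - h q) :=
        sum_Icc_le_sum_squarefree_prod hh hh_lt _
    _ = _ := by
        rw [divisors_primorial_filter_le]
        refine sum_congr rfl fun l _ ↦ prod_congr rfl fun q hq ↦ ?_
        have hq := Nat.prime_of_mem_primeFactors hq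
        rw [hcard hq, ← mul_one_sub, mul_div_mul_left _ _ (Nat.cast_ne_zero.2 hq.ne_zero)]

lemma card_shiftedPrimes_le_of_nat (hk : k ≠ 0) (hmk : m ∣ k) (h2k : 2 ∣ k) {T Y : ℕ}
    (hT : 1 ≤ T) (hY : 1 ≤ Y) (N : ℕ) :
    (#{p ∈ range N | p.Prime ∧ T * Y < p ∧
        ∀ q, q.Prime → q ≤ Y → ¬ q ∣ k → ¬ q ∣ m * p - 1} : ℝ) ≤
      N / (Real.log (T + 1) * (k.totient / k * Real.log (Y + 1))) + ((T * Y : ℕ) : ℝ) ^ 4 := by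
  have hm : 0 < m := Nat.pos_of_dvd_of_pos hmk hk.bot_lt
  have hprime {q : ℕ} (hq : q ∈ (primorial (T * Y)).primeFactors) : q.Prime ∧ q ≤ T * Y := by
    rw [primeFactors_primorial, Nat.mem_primesLE] at hq
    exact hq.symm
  have hsub : {p ∈ range N | p.Prime ∧ T * Y < p ∧
        ∀ q, q.Prime → q ≤ Y → ¬ q ∣ k → ¬ q ∣ m * p - 1} ⊆
      {p ∈ range N | ∀ q ∈ (primorial (T * Y)).primeFactors,
        (p : ZMod q) ∉ shiftedPrimeResidues m k Y q} := by
    refine monotone_filter_right _ fun p _ ⟨hp, hlt, hshift⟩ q hq ↦ ?_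
    obtain ⟨hq, hqR⟩ := hprime hq
    refine natCast_notMem_shiftedPrimeResidues Y hq hm hmk (fun hqp ↦ ?_) (hshift q hq)
    rw [(Nat.prime_dvd_prime_iff_eq hq hp).1 hqp] at hqR
    exact hqR.not_gt hlt
  have hlogT : 0 < Real.log (T + 1) := Real.log_pos (by exact_mod_cast Nat.lt_succ_of_le hT)
  have hlogY : 0 < Real.log (Y + 1) := Real.log_pos (by exact_mod_cast Nat.lt_succ_of_le hY)
  refine (Nat.cast_le.2 (card_le_card hsub)).trans
    ((card_avoiding_residues_le N (squarefree_primorial _)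
      (fun q _ ↦ shiftedPrimeResidues_nonempty Y q)
      (fun q hq ↦ card_shiftedPrimeResidues_lt Y (hprime hq).1 hmk h2k)
      (Nat.mul_pos hT hY)).trans ?_)
  gcongr
  exact log_mul_totient_div_self_mul_log_le Y hk hmk h2k T

lemma not_dvd_of_gcd_PM_eq_one {n M q : ℕ} {y : ℝ} (h : n.gcd (PM M y) = 1) (hq : q.Prime)
    (hqy : q ≤ ⌊y⌋₊) (hqM : ¬ q ∣ M) : ¬ q ∣ n := fun hqn ↦ by
  have hqP : q ∣ PM M y := dvd_prod_of_mem (fun q ↦ q)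
    (mem_filter.2 ⟨mem_range.2 (Nat.lt_succ_of_le hqy), hq, hqM⟩)
  exact hq.one_lt.ne' (Nat.dvd_one.1 (h ▸ Nat.dvd_gcd hqn hqP))

lemma totient_mul_totient_le_totient_two_mul (a b : ℕ) :
    a.totient * b.totient ≤ (2 * (a * b)).totient := by
  have htwo := Nat.totient_super_multiplicative 2 (a * b)
  rw [Nat.totient_two, one_mul] at htwo
  exact (Nat.totient_super_multiplicative a b).trans htwo

lemma card_shiftedPrimes_le {m M : ℕ} (hm : 1 ≤ m) (hM : 1 ≤ M) {t y X : ℝ} (ht : 1 < t)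
    (hy : 1 < y) (hX : 1 ≤ X) :
    (#((range (⌊X⌋₊ + 1)).filter fun p : ℕ ↦
        p.Prime ∧ t * y < p ∧ Nat.gcd (m * p - 1) (PM M y) = 1) : ℝ) ≤
      4 * (m / m.totient) * (M / M.totient) * X / (Real.log t * Real.log y) + (t * y) ^ 4 := by
  have hlogt := Real.log_pos ht
  have hlogy := Real.log_pos hy
  set k := 2 * (m * M) with hk
  have hφk : (m.totient : ℝ) * M.totient ≤ k.totient :=
    mod_cast totient_mul_totient_le_totient_two_mul m M
  have hfloor : ((⌊t⌋₊ * ⌊y⌋₊ : ℕ) : ℝ) ≤ t * y := by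
    rw [Nat.cast_mul]
    gcongr <;> exact Nat.floor_le (by linarith)
  have hsub : (range (⌊X⌋₊ + 1)).filter (fun p : ℕ ↦
        p.Prime ∧ t * y < p ∧ Nat.gcd (m * p - 1) (PM M y) = 1) ⊆
      {p ∈ range (⌊X⌋₊ + 1) | p.Prime ∧ ⌊t⌋₊ * ⌊y⌋₊ < p ∧
        ∀ q, q.Prime → q ≤ ⌊y⌋₊ → ¬ q ∣ k → ¬ q ∣ m * p - 1} :=
    monotone_filter_right _ fun p _ ⟨hp, hlt, hgcd⟩ ↦
      ⟨hp, Nat.cast_lt.1 (hfloor.trans_lt hlt), fun q hq hqy hqk ↦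
        not_dvd_of_gcd_PM_eq_one hgcd hq hqy fun hqM ↦ hqk ((hqM.mul_left m).mul_left 2)⟩
  refine (Nat.cast_le.2 (card_le_card hsub)).trans ((card_shiftedPrimes_le_of_nat
    (by positivity) ((dvd_mul_right m M).mul_left 2) (dvd_mul_right 2 _)
    ((Nat.one_le_floor_iff t).2 ht.le) ((Nat.one_le_floor_iff y).2 hy.le) _).trans ?_)
  refine add_le_add ?_ (by gcongr)
  calc ((⌊X⌋₊ + 1 : ℕ) : ℝ) / (Real.log (⌊t⌋₊ + 1) * (k.totient / k * Real.log (⌊y⌋₊ + 1)))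
      ≤ (2 * X) / (Real.log t * (m.totient * M.totient / k * Real.log y)) := by
        gcongr
        · push_cast
          linarith [Nat.floor_le (zero_le_one.trans hX)]
        · exact Real.log_nonneg (by simp)
        · exact (Nat.lt_floor_add_one t).le
        · exact (Nat.lt_floor_add_one y).le
    _ = 4 * (m / m.totient) * (M / M.totient) * X / (Real.log t * Real.log y) := by
        rw [hk]
        push_cast
        field_simp
        ring

end ShiftedPrimes

/-! ### The parameters `y`, `z`, `U` and the sets `R_m` -/

section Parameters

open Filter

lemma UU_eq_mul_zz (CU ε x : ℝ) (M : ℕ) :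
    UU CU M ε x = CU * (M.totient / M) * Real.log (yy ε x) * zz x := by
  rw [UU, zz]
  ring

lemma UU_pos {CU ε x : ℝ} {M : ℕ} (hCU : 0 < CU) (hM : 1 ≤ M) (hy : 1 < yy ε x) (hz : 0 < zz x) :
    0 < UU CU M ε x := by
  have hlog := Real.log_pos hy
  rw [UU_eq_mul_zz]
  positivity

lemma eventually_one_lt_yy_and_yy_le :
    ∀ᶠ x : ℝ in atTop, ∀ ε, 0 ≤ ε → ε < 1 → 1 < yy ε x ∧ yy ε x ≤ x ^ (1 / 16 : ℝ) := by
  have hlog₂ : Tendsto (fun x ↦ Real.log (Real.log x)) atTop atTop :=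
    Real.tendsto_log_atTop.comp Real.tendsto_log_atTop
  have hlog_le : ∀ᶠ u : ℝ in atTop, Real.log u ≤ 1 / 16 * u := by
    filter_upwards [Real.isLittleO_log_id_atTop.bound (show (0 : ℝ) < 1 / 16 by norm_num),
      eventually_ge_atTop 0] with u hu hu0
    simpa [abs_of_nonneg hu0] using (le_abs_self _).trans hu
  filter_upwards [eventually_gt_atTop 0, Real.tendsto_log_atTop.eventually_gt_atTop 0,
    hlog₂.eventually_gt_atTop 1, hlog₂.eventually hlog_le] with x hx hL₁ hL₂ hL₃ ε hε0 hε1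
  set L₁ := Real.log x
  set L₂ := Real.log L₁
  have hL₃_pos : 0 < Real.log L₂ := Real.log_pos hL₂
  have hyy : yy ε x = Real.exp ((1 - ε) * L₁ * Real.log L₂ / L₂) := rfl
  rw [hyy, Real.rpow_def_of_pos hx, Real.one_lt_exp_iff, Real.exp_le_exp]
  refine ⟨by positivity, (div_le_iff₀ (by positivity)).2 ?_⟩
  calc (1 - ε) * L₁ * Real.log L₂ ≤ 1 * L₁ * (1 / 16 * L₂) := by
        gcongr
        linarith
    _ = L₁ * (1 / 16) * L₂ := by ring

lemma eventually_pow_eight_mul_log_sq_le_zz :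
    ∀ᶠ x : ℝ in atTop, (x ^ (1 / 16 : ℝ)) ^ 8 * Real.log (x ^ (1 / 16 : ℝ)) ^ 2 ≤ zz x := by
  filter_upwards [eventually_gt_atTop 1, Real.tendsto_log_atTop.eventually_gt_atTop 1,
    (isLittleO_log_rpow_atTop (show (0 : ℝ) < 1 / 8 by norm_num)).bound one_pos]
    with x hx hL₁ hlog_le
  have hx0 : 0 < x := one_pos.trans hx
  set t := x ^ (1 / 16 : ℝ)
  have ht : 1 ≤ t := Real.one_le_rpow hx.le (by norm_num)
  have hx_eq : x = t ^ 16 := by rw [← Real.rpow_mul_natCast hx0.le]; norm_num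
  have hlog_le' : Real.log x ≤ t ^ 2 := by
    have ht_sq : x ^ (1 / 8 : ℝ) = t ^ 2 := by rw [← Real.rpow_mul_natCast hx0.le]; norm_num
    rw [one_mul, ht_sq, Real.norm_of_nonneg (sq_nonneg t)] at hlog_le
    exact (le_abs_self _).trans hlog_le
  have hlogt : Real.log t ≤ Real.log x := by
    rw [Real.log_rpow hx0]
    linarith
  have hL₂ : Real.log (Real.log x) ≤ Real.log x := Real.log_le_self (by linarith)
  have hzz : zz x = x / Real.log (Real.log x) := rfl
  have hL₂_pos := Real.log_pos hL₁
  have hlogt_nonneg := Real.log_nonneg ht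
  rw [hzz, le_div_iff₀ hL₂_pos]
  calc t ^ 8 * Real.log t ^ 2 * Real.log (Real.log x) ≤ t ^ 8 * (t ^ 2) ^ 2 * t ^ 2 := by
        gcongr <;> linarith
    _ = t ^ 14 := by ring
    _ ≤ t ^ 16 := pow_le_pow_right₀ ht (by norm_num)
    _ = x := hx_eq.symm

variable {CU ε x t : ℝ} {M : ℕ}

lemma sq_le_zz (ht : 1 ≤ t) (hlogt : 1 ≤ Real.log t) (hz : t ^ 8 * Real.log t ^ 2 ≤ zz x) :
    t ^ 2 ≤ zz x :=
  calc t ^ 2 = t ^ 2 * 1 := (mul_one _).symm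
    _ ≤ t ^ 8 * Real.log t ^ 2 := by
        gcongr
        · norm_num
        · exact one_le_pow₀ hlogt
    _ ≤ zz x := hz

lemma mul_pow_four_le_div_log {y z : ℝ} (hy : 1 < y) (hyt : y ≤ t)
    (hz : t ^ 8 * Real.log t ^ 2 ≤ z) : (t * y) ^ 4 ≤ z / (Real.log t * Real.log y) := by
  have ht : 1 < t := hy.trans_le hyt
  have hlogt := Real.log_pos ht
  have hlogy := Real.log_pos hy
  rw [le_div_iff₀ (by positivity)]
  calc (t * y) ^ 4 * (Real.log t * Real.log y) ≤ (t * t) ^ 4 * (Real.log t * Real.log t) := by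
        gcongr
    _ = t ^ 8 * Real.log t ^ 2 := by ring
    _ ≤ z := hz

lemma card_RmM_le (hy : 1 < yy ε x) (hyt : yy ε x ≤ t) (hlogt : 1 ≤ Real.log t)
    (hz : t ^ 8 * Real.log t ^ 2 ≤ zz x) (hM : 1 ≤ M) {m : ℕ} (hm : 1 ≤ m)
    (hzU : zz x ≤ UU CU M ε x / m) :
    (#(RmM CU ε x M m) : ℝ) ≤
      5 * (UU CU M ε x * M / (Real.log t * Real.log (yy ε x) * M.totient)) *
        (m.totient : ℝ)⁻¹ := by
  set y := yy ε x
  set U := UU CU M ε x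
  have hφm : (0 : ℝ) < m.totient := Nat.cast_pos.2 (Nat.totient_pos.2 hm)
  have hφM : (0 : ℝ) < M.totient := Nat.cast_pos.2 (Nat.totient_pos.2 hM)
  have ht : 1 < t := hy.trans_le hyt
  have hlogy : 0 < Real.log y := Real.log_pos hy
  have hty : t * y ≤ t ^ 2 := by rw [sq]; gcongr
  have ht_sq : t ^ 2 ≤ zz x := sq_le_zz ht.le hlogt hz
  have hX : 1 ≤ U / m := (one_le_pow₀ ht.le).trans (ht_sq.trans hzU)
  have hsub : RmM CU ε x M m ⊆ (range (⌊U / m⌋₊ + 1)).filter fun p : ℕ ↦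
      p.Prime ∧ t * y < p ∧ Nat.gcd (m * p - 1) (PM M y) = 1 :=
    monotone_filter_right _ fun p _ ⟨hp, hzp, hgcd⟩ ↦
      ⟨hp, (hty.trans ht_sq).trans_lt hzp, hgcd⟩
  have herror : (t * y) ^ 4 ≤ (m / m.totient) * (M / M.totient) * (U / m) /
      (Real.log t * Real.log y) :=
    calc (t * y) ^ 4 ≤ zz x / (Real.log t * Real.log y) := mul_pow_four_le_div_log hy hyt hz
      _ ≤ 1 * 1 * (U / m) / (Real.log t * Real.log y) := by gcongr; linarith
      _ ≤ (m / m.totient) * (M / M.totient) * (U / m) / (Real.log t * Real.log y) := by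
          gcongr
          · exact (one_le_div hφm).2 (Nat.cast_le.2 m.totient_le)
          · exact (one_le_div hφM).2 (Nat.cast_le.2 M.totient_le)
  calc (#(RmM CU ε x M m) : ℝ) ≤ 4 * (m / m.totient) * (M / M.totient) * (U / m) /
        (Real.log t * Real.log y) + (t * y) ^ 4 :=
        (Nat.cast_le.2 (card_le_card hsub)).trans (card_shiftedPrimes_le hm hM ht hy hX)
    _ ≤ 4 * (m / m.totient) * (M / M.totient) * (U / m) / (Real.log t * Real.log y) +
        (m / m.totient) * (M / M.totient) * (U / m) / (Real.log t * Real.log y) := by gcongr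
    _ = 5 * (U * M / (Real.log t * Real.log y * M.totient)) * (m.totient : ℝ)⁻¹ := by
        field_simp
        norm_num

lemma sum_card_RmM_le (hCU : 0 < CU) (hy : 1 < yy ε x) (hyt : yy ε x ≤ t)
    (hlogt : 1 ≤ Real.log t) (hz : t ^ 8 * Real.log t ^ 2 ≤ zz x) (hM : 1 ≤ M) {K : ℝ}
    (hK : 2 ≤ K) :
    ∑ m ∈ (range (⌊UU CU M ε x / zz x⌋₊ + 1)).filter (fun m : ℕ ↦
        UU CU M ε x / (zz x * K) ≤ m ∧ m < UU CU M ε x / zz x), (#(RmM CU ε x M m) : ℝ) ≤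
      60 * (UU CU M ε x * M / (Real.log t * Real.log (yy ε x) * M.totient)) * Real.log K := by
  have ht : 1 < t := hy.trans_le hyt
  have hz_pos : 0 < zz x := (by positivity : 0 < t ^ 2).trans_le (sq_le_zz ht.le hlogt hz)
  have hU : 0 < UU CU M ε x := UU_pos hCU hM hy hz_pos
  have hlogy := Real.log_pos hy
  set B := UU CU M ε x * M / (Real.log t * Real.log (yy ε x) * M.totient)
  set s := (range (⌊UU CU M ε x / zz x⌋₊ + 1)).filter fun m : ℕ ↦
    UU CU M ε x / (zz x * K) ≤ m ∧ m < UU CU M ε x / zz x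
  have hs_bounds {m : ℕ} (hm : m ∈ s) : UU CU M ε x / zz x ≤ K * m ∧ m < UU CU M ε x / zz x := by
    obtain ⟨hle, hlt⟩ := (mem_filter.1 hm).2
    refine ⟨?_, hlt⟩
    rwa [← div_div, div_le_iff₀' (by linarith)] at hle
  have hs_pos : ∀ m ∈ s, 0 < m := fun m hm ↦ by
    have hKm : 0 < K * m := (div_pos hU hz_pos).trans_le (hs_bounds hm).1
    exact Nat.cast_pos.1 (pos_of_mul_pos_right hKm (by linarith))
  calc ∑ m ∈ s, (#(RmM CU ε x M m) : ℝ) ≤ ∑ m ∈ s, 5 * B * (m.totient : ℝ)⁻¹ :=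
        sum_le_sum fun m hm ↦ card_RmM_le hy hyt hlogt hz hM (hs_pos m hm)
          ((le_div_comm₀ (Nat.cast_pos.2 (hs_pos m hm)) hz_pos).1 (hs_bounds hm).2.le)
    _ = 5 * B * ∑ m ∈ s, (m.totient : ℝ)⁻¹ := (mul_sum _ _ _).symm
    _ ≤ 5 * B * (12 * Real.log K) := by
        gcongr
        exact sum_inv_totient_le_mul_log hs_pos hK fun a ha b hb ↦
          (hs_bounds hb).2.le.trans (hs_bounds ha).1
    _ = 60 * B * Real.log K := by ring

end Parameters

theorem stmt5_general :
    ∃ A : ℝ, 0 < A ∧ ∃ x₀ : ℝ, ∀ ε : ℝ, 0 ≤ ε → ε < 1 → ∀ CU : ℝ, 0 < CU → ∀ x : ℝ, x ≥ x₀ →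
    ∀ M : ℕ, 1 ≤ M → ∀ K : ℝ, 2 ≤ K →
    ∑ m ∈ (range (⌊UU CU M ε x / zz x⌋₊ + 1)).filter (fun m : ℕ ↦
        UU CU M ε x / (zz x * K) ≤ m ∧ m < UU CU M ε x / zz x), (#(RmM CU ε x M m) : ℝ) ≤
      A * UU CU M ε x * M * Real.log K / (Real.log x * Real.log (yy ε x) * M.totient) := by
  have hlarge : ∀ᶠ x : ℝ in Filter.atTop, 0 < x ∧ 1 ≤ Real.log (x ^ (1 / 16 : ℝ)) := by
    filter_upwards [Filter.eventually_gt_atTop 0,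
      Real.tendsto_log_atTop.eventually_ge_atTop 16] with x hx hlog
    rw [Real.log_rpow hx]
    exact ⟨hx, by linarith⟩
  obtain ⟨x₀, hx₀⟩ := Filter.eventually_atTop.1 (hlarge.and
    (eventually_one_lt_yy_and_yy_le.and eventually_pow_eight_mul_log_sq_le_zz))
  refine ⟨960, by norm_num, x₀, fun ε hε0 hε1 CU hCU x hx M hM K hK ↦ ?_⟩
  obtain ⟨⟨hx_pos, hlogt⟩, hyy, hz⟩ := hx₀ x hx
  obtain ⟨hy, hyt⟩ := hyy ε hε0 hε1
  refine (sum_card_RmM_le hCU hy hyt hlogt hz hM hK).trans_eq ?_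
  rw [Real.log_rpow hx_pos]
  field_simp
  ring

/-- For any `K ≥ 2`,
`∑_{U/(zK) ≤ m < U/z} |R_m^{(M)}| ≪ U·M·log K/((log x)(log y)·φ(M))`. -/
theorem stmt5 :
    ∃ A : ℝ, 0 < A ∧ ∀ ε : ℝ, 0 < ε → ε < 1 → ∀ CU : ℝ, 0 < CU →
    ∃ κ : ℝ, 0 < κ ∧ ∃ x₀ : ℝ, ∀ x : ℝ, x ≥ x₀ →
    ∀ M : ℕ, 1 ≤ M → (M : ℝ) ≤ κ * x ^ ((1 : ℝ) / 5) →
    ∀ K : ℝ, 2 ≤ K →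
    (∑ m ∈ (Finset.range (⌊UU CU M ε x / zz x⌋₊ + 1)).filter (fun m : ℕ =>
        UU CU M ε x / (zz x * K) ≤ (m : ℝ) ∧ (m : ℝ) < UU CU M ε x / zz x),
      ((RmM CU ε x M m).card : ℝ))
      ≤ A * UU CU M ε x * (M : ℝ) * Real.log K /
          (Real.log x * Real.log (yy ε x) * (M.totient : ℝ)) := by
  obtain ⟨A, hA, x₀, hx₀⟩ := stmt5_general
  exact ⟨A, hA, fun ε hε0 hε1 CU hCU ↦ ⟨1, one_pos, x₀, fun x hx M hM _ ↦
    hx₀ ε hε0.le hε1 CU hCU x hx M hM⟩⟩
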